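/- Change-of-base expansion with product-of-binomials coefficients: for integers 0 ≤ n ≤ k, all α, β, γ, δ ∈ ℂ such that every bracket appearing in a denominator is nonzero, and all z ∈ ℂ, one has [α+rz]_n[α−rz]_n[β+rz]_{k−n}[β−rz]_{k−n} = Σ_{m=0}^{k} R_n^m(α,β,γ,δ;k) · [γ+rz]_m[γ−rz]_m[δ+rz]_{k−m}[δ−rz]_{k−m}. -/

import Mathlib

noncomputable section

open Complex Finset

namespace Ell

/-- `x^s = exp(-iπ s /(r τ))`. -/
def xp (τ : ℂ) (r : ℝ) (s : ℂ) : ℂ :=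
  Complex.exp (-Complex.I * (Real.pi : ℂ) * s / ((r : ℂ) * τ))

/-- `Θ_p(z) = ∏_{j ≥ 0} (1 - z p^j)(1 - p^{j+1}/z)(1 - p^{j+1})`. -/
def Theta (p z : ℂ) : ℂ :=
  ∏' j : ℕ, ((1 - z * p ^ j) * (1 - p ^ (j + 1) / z) * (1 - p ^ (j + 1)))

/-- The bracket `[u] = x^{u²/r - u} Θ_p(x^{2u})` with `p = x^{2r}`. -/
def br (τ : ℂ) (r : ℝ) (u : ℂ) : ℂ :=
  xp τ r (u ^ 2 / (r : ℂ) - u) * Theta (xp τ r (2 * (r : ℂ))) (xp τ r (2 * u))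

/-- Elliptic shifted factorial `[u]_n = ∏_{j=0}^{n-1} [u+j]`. -/
def brF (τ : ℂ) (r : ℝ) (u : ℂ) (n : ℕ) : ℂ :=
  ∏ j ∈ Finset.range n, br τ r (u + (j : ℂ))

/-- Elliptic binomial coefficient `C_n^k(α,β,γ)`. -/
def Cnk (τ : ℂ) (r : ℝ) (k n : ℕ) (α β γ : ℂ) : ℂ :=
  brF τ r 1 k / (brF τ r 1 n * brF τ r 1 (k - n)) *
    (brF τ r (α - γ) n * brF τ r (α + γ + (k : ℂ) - (n : ℂ)) n *
      brF τ r (α - β) (k - n) * brF τ r (α + β + (n : ℂ)) (k - n)) /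
    (brF τ r (β - γ + (n : ℂ) - (k : ℂ)) n * brF τ r (γ - β - (n : ℂ)) (k - n) *
      brF τ r (β + γ) k)

/-- The elliptic 6j-symbol `R_n^m(α,β,γ,δ;k)`. -/
def Rnm (τ : ℂ) (r : ℝ) (k n m : ℕ) (α β γ δ : ℂ) : ℂ :=
  ∑ j ∈ Finset.range (min n m + 1),
    Cnk τ r n j α γ (β + (k : ℂ) - (n : ℂ)) * Cnk τ r (k - j) (m - j) β (γ + (j : ℂ)) δ

/-- Terminating very-well-poised elliptic hypergeometric sum with explicit
truncation `N`:  `Σ_{j=0}^N ([u₀+2j]/[u₀]) ([u₀]_j/[1]_j) ∏ᵢ [uᵢ]_j/[u₀+1-uᵢ]_j`. -/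
def Vsum (τ : ℂ) (r : ℝ) (u₀ : ℂ) (us : List ℂ) (N : ℕ) : ℂ :=
  ∑ j ∈ Finset.range (N + 1),
    br τ r (u₀ + 2 * (j : ℂ)) / br τ r u₀ * (brF τ r u₀ j / brF τ r 1 j) *
      (us.map fun ui => brF τ r ui j / brF τ r (u₀ + 1 - ui) j).prod

/-- "Every bracket appearing in a denominator of `C_n^k(·,β,γ)` is nonzero". -/
def CdenomNZ (τ : ℂ) (r : ℝ) (k n : ℕ) (β γ : ℂ) : Prop :=
  brF τ r 1 n ≠ 0 ∧ brF τ r 1 (k - n) ≠ 0 ∧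
    brF τ r (β - γ + (n : ℂ) - (k : ℂ)) n ≠ 0 ∧
    brF τ r (γ - β - (n : ℂ)) (k - n) ≠ 0 ∧ brF τ r (β + γ) k ≠ 0

/-- "Every bracket appearing in a denominator of `R_n^m(α,β,γ,δ;k)` is nonzero". -/
def RdenomNZ (τ : ℂ) (r : ℝ) (k n m : ℕ) (β γ δ : ℂ) : Prop :=
  ∀ j ≤ min n m,
    CdenomNZ τ r n j γ (β + (k : ℂ) - (n : ℂ)) ∧
      CdenomNZ τ r (k - j) (m - j) (γ + (j : ℂ)) δ

/-- Jacobi theta `ϑ₁(v|σ)`. -/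
def th1 (v σ : ℂ) : ℂ :=
  2 * Complex.exp (2 * (Real.pi : ℂ) * Complex.I * σ / 8) *
    (∏' n : ℕ, (1 - Complex.exp (2 * (Real.pi : ℂ) * Complex.I * σ) ^ (n + 1))) *
    Complex.sin ((Real.pi : ℂ) * v) *
    ∏' n : ℕ,
      (1 - 2 * Complex.exp (2 * (Real.pi : ℂ) * Complex.I * σ) ^ (n + 1) *
            Complex.cos (2 * (Real.pi : ℂ) * v) +
        Complex.exp (2 * (Real.pi : ℂ) * Complex.I * σ) ^ (2 * (n + 1)))

/-- Jacobi theta `ϑ₀(v|σ)`. -/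
def th0 (v σ : ℂ) : ℂ :=
  -Complex.I * Complex.exp ((Real.pi : ℂ) * Complex.I * (v + σ / 4)) * th1 (v + σ / 2) σ

/-- Jacobi theta `ϑ₂(v|σ)`. -/
def th2 (v σ : ℂ) : ℂ := th1 (v + 1 / 2) σ

/-- Jacobi theta `ϑ₃(v|σ)`. -/
def th3 (v σ : ℂ) : ℂ :=
  Complex.exp ((Real.pi : ℂ) * Complex.I * (v + σ / 4)) * th1 (v + (σ + 1) / 2) σ

/-- Intertwining vector component `ψ_ε(u)^a_b`, `ε ∈ {1, -1}`. -/
def psi (τ : ℂ) (r : ℝ) (u : ℂ) (ε : ℤ) (a b : ℤ) : ℂ :=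
  if ε = 1 then th0 ((((a : ℂ) - (b : ℂ)) * u + (a : ℂ)) / (2 * (r : ℂ))) (τ / 2)
  else th3 ((((a : ℂ) - (b : ℂ)) * u + (a : ℂ)) / (2 * (r : ℂ))) (τ / 2)

/-- The constant `C = x^{-r/4} e^{-iπ/4} τ^{1/2}`. -/
def Cc (τ : ℂ) (r : ℝ) : ℂ :=
  xp τ r (-(r : ℂ) / 4) * Complex.exp (-(Real.pi : ℂ) * Complex.I / 4) * τ ^ (1 / 2 : ℂ)

/-- Dual intertwining vector component `ψ*_ε(u)^a_b = -ε(a-b) C² ψ_{-ε}(u-1)^a_b/(2[b][u])`. -/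
def psiStar (τ : ℂ) (r : ℝ) (u : ℂ) (ε : ℤ) (a b : ℤ) : ℂ :=
  -(ε : ℂ) * ((a : ℂ) - (b : ℂ)) * Cc τ r ^ 2 * psi τ r (u - 1) (-ε) a b /
    (2 * br τ r (b : ℂ) * br τ r u)

/-- Sign attached to a boolean. -/
def sg (b : Bool) : ℤ := if b then 1 else -1

/-- Canonical path from `a`: up for `j ≤ n`, down afterwards. -/
def cpathZ (a n : ℤ) (j : ℕ) : ℤ := if (j : ℤ) ≤ n then a + j else a + 2 * n - j

/-- Admissibility: `a - b ∈ {-k, -k+2, …, k}`. -/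
def adm (k : ℕ) (a b : ℤ) : Prop := (a - b).natAbs ≤ k ∧ (a - b - (k : ℤ)) % 2 = 0

instance (k : ℕ) (a b : ℤ) : Decidable (adm k a b) := by unfold adm; infer_instance

/-- Fused intertwining vector component `ψ^{(k)}_μ(u)^a_b` (zero if `a,b` not admissible). -/
def psiF (τ : ℂ) (r : ℝ) (k : ℕ) (μ : ℤ) (u : ℂ) (a b : ℤ) : ℂ :=
  if adm k a b then
    ∑ ε ∈ Finset.univ.filter fun ε : Fin k → Bool => (∑ j, sg (ε j)) = μ,
      ∏ j : Fin k,
        psi τ r (u + (k : ℂ) - (((j : ℕ) + 1 : ℕ) : ℂ)) (sg (ε j))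
          (cpathZ a (((k : ℤ) - (a - b)) / 2) (j : ℕ))
          (cpathZ a (((k : ℤ) - (a - b)) / 2) ((j : ℕ) + 1))
  else 0

/-- Partial-sum path attached to a sign sequence `δ`, starting at `a`. -/
def spath (k : ℕ) (a : ℤ) (δ : Fin k → Bool) (j : ℕ) : ℤ :=
  a + ∑ i ∈ Finset.range j, if h : i < k then sg (δ ⟨i, h⟩) else 0

/-- Fused dual intertwining vector component `ψ*^{(k)}_μ(u)^b_a`
(sum over all admissible paths from `a` to `b`; zero if not admissible). -/
def psiStarF (τ : ℂ) (r : ℝ) (k : ℕ) (μ : ℤ) (u : ℂ) (b a : ℤ) : ℂ :=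
  if adm k a b then
    ∑ δ ∈ Finset.univ.filter fun δ : Fin k → Bool => (∑ j, sg (δ j)) = b - a,
      ∏ j : Fin k,
        psiStar τ r (u + (k : ℂ) - (((j : ℕ) + 1 : ℕ) : ℂ))
          (if ((j : ℕ) + 1 : ℤ) ≤ ((k : ℤ) + μ) / 2 then 1 else -1)
          (spath k a δ ((j : ℕ) + 1)) (spath k a δ (j : ℕ))
  else 0

/-- The `L`-matrix `L^{(k)}(a,b;c,d|u) = Σ_μ ψ*^{(k)}_μ(u)^d_c ψ^{(k)}_μ(u)^a_b`. -/
def Lk (τ : ℂ) (r : ℝ) (k : ℕ) (u : ℂ) (a b c d : ℤ) : ℂ :=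
  ∑ i ∈ Finset.range (k + 1),
    psiStarF τ r k ((k : ℤ) - 2 * (i : ℤ)) u d c * psiF τ r k ((k : ℤ) - 2 * (i : ℤ)) u a b

/-- Normalized face weight `W̄(a,b;d,c|u)` (arguments ordered (NW, NE; SW, SE)). -/
def Wb (τ : ℂ) (r : ℝ) (u : ℂ) (a b d c : ℤ) : ℂ :=
  if b = a + 1 ∧ d = a + 1 ∧ c = a + 2 then 1
  else if b = a - 1 ∧ d = a - 1 ∧ c = a - 2 then 1
  else if b = a + 1 ∧ d = a + 1 ∧ c = a then
    br τ r ((a : ℂ) - u) * br τ r 1 / (br τ r (a : ℂ) * br τ r (1 + u))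
  else if b = a - 1 ∧ d = a - 1 ∧ c = a then
    br τ r ((a : ℂ) + u) * br τ r 1 / (br τ r (a : ℂ) * br τ r (1 + u))
  else if b = a + 1 ∧ d = a - 1 ∧ c = a then
    br τ r ((a : ℂ) + 1) * br τ r u / (br τ r (a : ℂ) * br τ r (1 + u))
  else if b = a - 1 ∧ d = a + 1 ∧ c = a then
    br τ r ((a : ℂ) - 1) * br τ r u / (br τ r (a : ℂ) * br τ r (1 + u))
  else 0

/-- Sequence with prescribed endpoints `d`, `c` and free interior values `f`. -/
def seqI (k : ℕ) (d c : ℤ) (f : Fin (k - 1) → ℤ) (j : ℕ) : ℤ :=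
  if h0 : j = 0 then d
  else if hj : j < k then f ⟨j - 1, by omega⟩ else c

/-- Fused face weight `W^{(k,1)}(a,b;d,c|u)`. -/
def Wk1 (τ : ℂ) (r : ℝ) (k : ℕ) (u : ℂ) (a b d c : ℤ) : ℂ :=
  if adm k a b then
    ∑' f : Fin (k - 1) → ℤ,
      ∏ j ∈ Finset.range k,
        Wb τ r (u + (k : ℂ) - ((j : ℂ) + 1))
          (cpathZ a (((k : ℤ) - (a - b)) / 2) j)
          (cpathZ a (((k : ℤ) - (a - b)) / 2) (j + 1))
          (seqI k d c f j) (seqI k d c f (j + 1))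
  else 0

/-- Fused face weight `W^{(k,l)}(a,b;d,c|u)`. -/
def Wkl (τ : ℂ) (r : ℝ) (k l : ℕ) (u : ℂ) (a b d c : ℤ) : ℂ :=
  if adm l b c then
    ∑' g : Fin (l - 1) → ℤ,
      ∏ i ∈ Finset.range l,
        Wk1 τ r k (u - (l : ℂ) + ((i : ℂ) + 1))
          (seqI l a d g i) (cpathZ b (((l : ℤ) - (b - c)) / 2) i)
          (seqI l a d g (i + 1)) (cpathZ b (((l : ℤ) - (b - c)) / 2) (i + 1))
  else 0

/-- Eight-vertex weight `ā(u)`. -/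
def aw (τ : ℂ) (r : ℝ) (u : ℂ) : ℂ :=
  th2 (1 / (2 * (r : ℂ))) (τ / 2) * th2 (u / (2 * (r : ℂ))) (τ / 2) /
    (th2 0 (τ / 2) * th2 ((1 + u) / (2 * (r : ℂ))) (τ / 2))

/-- Eight-vertex weight `b̄(u)`. -/
def bw (τ : ℂ) (r : ℝ) (u : ℂ) : ℂ :=
  th2 (1 / (2 * (r : ℂ))) (τ / 2) * th1 (u / (2 * (r : ℂ))) (τ / 2) /
    (th2 0 (τ / 2) * th1 ((1 + u) / (2 * (r : ℂ))) (τ / 2))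

/-- Eight-vertex weight `c̄(u)`. -/
def cw (τ : ℂ) (r : ℝ) (u : ℂ) : ℂ :=
  th1 (1 / (2 * (r : ℂ))) (τ / 2) * th2 (u / (2 * (r : ℂ))) (τ / 2) /
    (th2 0 (τ / 2) * th1 ((1 + u) / (2 * (r : ℂ))) (τ / 2))

/-- Eight-vertex weight `d̄(u)`. -/
def dw (τ : ℂ) (r : ℝ) (u : ℂ) : ℂ :=
  -(th1 (1 / (2 * (r : ℂ))) (τ / 2) * th1 (u / (2 * (r : ℂ))) (τ / 2)) /
    (th2 0 (τ / 2) * th2 ((1 + u) / (2 * (r : ℂ))) (τ / 2))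

/-- The normalized eight-vertex `R`-matrix entry `R̄(u)_{(ε₁,ε₂),(ε₁',ε₂')}`. -/
def Rbar (τ : ℂ) (r : ℝ) (u : ℂ) (e1 e2 e1' e2' : ℤ) : ℂ :=
  if e1' = e1 ∧ e2' = e2 ∧ e1 = e2 then aw τ r u
  else if e1' = e1 ∧ e2' = e2 ∧ e1 = -e2 then bw τ r u
  else if e1' = e2 ∧ e2' = e1 ∧ e1 = -e2 then cw τ r u
  else if e1' = -e1 ∧ e2' = -e2 ∧ e1 = e2 then dw τ r u
  else 0

/-- Sklyanin standard-basis vector `v_+(z)`. -/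
def vp (τ z : ℂ) : ℂ := th3 (2 * z) (2 * τ) - th2 (2 * z) (2 * τ)

/-- Sklyanin standard-basis vector `v_-(z)`. -/
def vm (τ z : ℂ) : ℂ := th3 (2 * z) (2 * τ) + th2 (2 * z) (2 * τ)

/-!
The Jacobi triple product, obtained as the limit of the `q`-binomial theorem, identifies `[u]` with
a theta function of modulus `-1/τ` up to a Gaussian factor. The addition formula for theta functions
then gives `[x + y][x - y] = g(x) f(y) - f(x) g(y)`. An antisymmetric form of rank two satisfies the
Plücker relation, which here is the three-term relation of Weierstrass, and the antisymmetry makes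
`[u]` odd.

The three-term relation plays two roles: it expresses `[α ± z]` through `[β ± z]` and `[γ ± z]`, and
it yields the Pascal recurrence of the coefficients `C_n^k`. Induction on `k` gives the elliptic
binomial theorem `[α ± z]_k = Σ_n C_n^k(α, β, γ) [β ± z]_n [γ ± z]_{k-n}`. Expand `[α ± z]_n` by it
with parameters `γ` and `β + k - n`. The second parameter is chosen so that the new factors merge
with `[β ± z]_{k-n}` into `[β ± z]_{k-j}`, which a second application, with parameters `γ + j` and
`δ`, expands in turn.
-/

section Combinatorics

variable {R : Type*}

lemma sum_antidiagonal_succ_of_pascal [CommSemiring R] {k : ℕ} {A B C : ℕ → ℕ → R}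
    (h_left : C 0 (k + 1) = B 0 k) (h_right : C (k + 1) 0 = A k 0)
    (h_mid : ∀ a b, a + b + 1 = k → C (a + 1) (b + 1) = A a (b + 1) + B (a + 1) b)
    (u : ℕ → ℕ → R) :
    ∑ i ∈ antidiagonal k, (A i.1 i.2 * u (i.1 + 1) i.2 + B i.1 i.2 * u i.1 (i.2 + 1)) =
      ∑ i ∈ antidiagonal (k + 1), C i.1 i.2 * u i.1 i.2 := by
  cases k with
  | zero =>
    simp [Nat.sum_antidiagonal_succ, h_left, h_right, add_comm]
  | succ k =>
    have h_interior : ∑ i ∈ antidiagonal k, C (i.1 + 1) (i.2 + 1) * u (i.1 + 1) (i.2 + 1) =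
        ∑ i ∈ antidiagonal k, A i.1 (i.2 + 1) * u (i.1 + 1) (i.2 + 1) +
          ∑ i ∈ antidiagonal k, B (i.1 + 1) i.2 * u (i.1 + 1) (i.2 + 1) := by
      rw [← sum_add_distrib]
      refine sum_congr rfl fun i hi => ?_
      rw [h_mid i.1 i.2 (by rw [mem_antidiagonal.1 hi]), add_mul]
    rw [sum_add_distrib, Nat.sum_antidiagonal_succ', Nat.sum_antidiagonal_succ,
      Nat.sum_antidiagonal_succ, Nat.sum_antidiagonal_succ', h_interior, h_left, h_right]
    ring

lemma sum_range_sum_Ico_comm [AddCommMonoid R] (n k : ℕ) (f : ℕ → ℕ → R) :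
    ∑ j ∈ range (n + 1), ∑ m ∈ Ico j (k + 1), f j m =
      ∑ m ∈ range (k + 1), ∑ j ∈ range (min n m + 1), f j m :=
  sum_comm' fun j m => by simp only [mem_range, mem_Ico]; omega

end Combinatorics

section QBinomial

variable {K : Type*} [Field K]

/-- The `q`-Pochhammer symbol `(p; p)_n = (1 - p)(1 - p²)⋯(1 - pⁿ)`. -/
def qPochhammer (p : K) (n : ℕ) : K := ∏ j ∈ range n, (1 - p ^ (j + 1))

@[simp]
lemma qPochhammer_zero (p : K) : qPochhammer p 0 = 1 := prod_range_zero _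

lemma qPochhammer_succ (p : K) (n : ℕ) :
    qPochhammer p (n + 1) = qPochhammer p n * (1 - p ^ (n + 1)) := prod_range_succ _ _

lemma qPochhammer_ne_zero {p : K} (hp : ∀ j : ℕ, p ^ (j + 1) ≠ 1) (n : ℕ) :
    qPochhammer p n ≠ 0 :=
  prod_ne_zero_iff.2 fun j _ => sub_ne_zero.2 (hp j).symm

theorem prod_one_add_mul_pow_eq_sum_antidiagonal {p : K} (hp : ∀ j : ℕ, p ^ (j + 1) ≠ 1)
    (w : K) (k : ℕ) :
    ∏ j ∈ range k, (1 + w * p ^ j) = ∑ i ∈ antidiagonal k,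
      qPochhammer p (i.1 + i.2) / (qPochhammer p i.1 * qPochhammer p i.2) *
        p ^ i.1.choose 2 * w ^ i.1 := by
  induction k with
  | zero => simp
  | succ k ih =>
    have choose_two_succ (i : ℕ) : (i + 1).choose 2 = i + i.choose 2 := by
      rw [Nat.choose_succ_succ' i 1, Nat.choose_one_right]
    have h_ne := qPochhammer_ne_zero hp
    let coeff (a b : ℕ) : K :=
      qPochhammer p (a + b) / (qPochhammer p a * qPochhammer p b) * p ^ a.choose 2
    rw [prod_range_succ, ih, sum_mul, ← sum_antidiagonal_succ_of_pascal (C := coeff)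
      (A := fun a b => coeff a b * p ^ k) (B := coeff) (u := fun a _ => w ^ a)]
    · exact sum_congr rfl fun i _ => by ring
    · simp [coeff, h_ne]
    · simp [coeff, h_ne, choose_two_succ, pow_add, mul_comm]
    · rintro a b rfl
      have ha : 1 - p ^ (a + 1) ≠ 0 := sub_ne_zero.2 (hp a).symm
      have hb : 1 - p ^ (b + 1) ≠ 0 := sub_ne_zero.2 (hp b).symm
      have ha' := h_ne a
      have hb' := h_ne b
      simp only [coeff, choose_two_succ, ← add_assoc, add_right_comm a 1 b]
      rw [qPochhammer_succ p (a + b + 1), qPochhammer_succ p a, qPochhammer_succ p b]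
      field_simp
      ring

end QBinomial

section TripleProduct

open Filter Topology
open scoped Real

local notation "𝐞(" v ")" => exp (2 * π * I * v)

/-- The `N`-th partial product of `Θ_p(z)`. -/
def thetaPartial (p z : ℂ) (N : ℕ) : ℂ :=
  ∏ j ∈ range N, ((1 - z * p ^ j) * (1 - p ^ (j + 1) / z) * (1 - p ^ (j + 1)))

lemma tendsto_thetaPartial {p : ℂ} (hp : ‖p‖ < 1) (z : ℂ) :
    Tendsto (thetaPartial p z) atTop (𝓝 (Theta p z)) := by
  have h_geom : Summable fun j : ℕ => ‖p‖ ^ j := summable_geometric_of_lt_one (norm_nonneg p) hp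
  have h_geom_succ : Summable fun j : ℕ => ‖p‖ ^ (j + 1) := (summable_nat_add_iff 1).2 h_geom
  have h₁ : Multipliable fun j : ℕ => 1 + -(z * p ^ j) :=
    multipliable_one_add_of_summable (by simpa using h_geom.mul_left ‖z‖)
  have h₂ : Multipliable fun j : ℕ => 1 + -(p ^ (j + 1) / z) :=
    multipliable_one_add_of_summable (by simpa using h_geom_succ.div_const ‖z‖)
  have h₃ : Multipliable fun j : ℕ => 1 + -p ^ (j + 1) :=
    multipliable_one_add_of_summable (by simpa using h_geom_succ)
  simp only [← sub_eq_add_neg] at h₁ h₂ h₃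
  exact ((h₁.mul h₂).mul h₃).hasProd.tendsto_prod_nat

lemma pow_succ_ne_one {p : ℂ} (hp : ‖p‖ < 1) (j : ℕ) : p ^ (j + 1) ≠ 1 := fun h => by
  have h_lt : ‖p‖ ^ (j + 1) < 1 := pow_lt_one₀ (norm_nonneg p) hp j.succ_ne_zero
  rw [← norm_pow, h, norm_one] at h_lt
  exact lt_irrefl 1 h_lt

lemma exists_tendsto_qPochhammer {p : ℂ} (hp : ‖p‖ < 1) :
    ∃ L ≠ 0, Tendsto (qPochhammer p) atTop (𝓝 L) := by
  have h_summable : Summable fun j : ℕ => ‖-p ^ (j + 1)‖ := by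
    simpa using (summable_nat_add_iff 1).2 (summable_geometric_of_lt_one (norm_nonneg p) hp)
  refine ⟨∏' j : ℕ, (1 + -p ^ (j + 1)),
    tprod_one_add_ne_zero_of_summable (fun j => ?_) h_summable, ?_⟩
  · rw [← sub_eq_add_neg]
    exact sub_ne_zero.2 (pow_succ_ne_one hp j).symm
  · refine (multipliable_one_add_of_summable h_summable).hasProd.tendsto_prod_nat.congr fun n => ?_
    simp only [qPochhammer, sub_eq_add_neg]

lemma prod_one_sub_mul_one_sub_eq {K : Type*} [Field K] {p z : K} (hp : p ≠ 0) (hz : z ≠ 0)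
    (N : ℕ) :
    ∏ j ∈ range N, ((1 - z * p ^ j) * (1 - p ^ (j + 1) / z)) =
      (∏ j ∈ range N, -(p ^ (j + 1) / z)) * ∏ j ∈ range (2 * N), (1 + -(z / p ^ N) * p ^ j) := by
  have h_low : ∏ j ∈ range N, (1 - p ^ (j + 1) / z) =
      (∏ j ∈ range N, -(p ^ (j + 1) / z)) * ∏ j ∈ range N, (1 + -(z / p ^ N) * p ^ j) := by
    rw [← prod_range_reflect (fun j => 1 + -(z / p ^ N) * p ^ j), ← prod_mul_distrib]
    refine prod_congr rfl fun j hj => ?_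
    obtain ⟨d, rfl⟩ : ∃ d, N = j + 1 + d := ⟨N - (j + 1), by have := mem_range.1 hj; omega⟩
    rw [show j + 1 + d - 1 - j = d by omega, pow_add p (j + 1) d]
    field_simp
    ring
  have h_high : ∏ j ∈ range N, (1 - z * p ^ j) =
      ∏ j ∈ range N, (1 + -(z / p ^ N) * p ^ (N + j)) := by
    refine prod_congr rfl fun j _ => ?_
    rw [pow_add]
    field_simp
    ring
  rw [prod_mul_distrib, h_low, h_high, two_mul, prod_range_add]
  ring

lemma prod_neg_exp_div_exp (σ v : ℂ) (N : ℕ) :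
    ∏ j ∈ range N, -(𝐞(σ) ^ (j + 1) / 𝐞(v)) =
      exp (-(π * I * N) + π * I * σ * N * (N + 1) - 2 * π * I * v * N) := by
  induction N with
  | zero => simp
  | succ N ih =>
    rw [prod_range_succ, ih, ← exp_nat_mul, ← exp_sub, neg_eq_neg_one_mul (exp (_ - _)),
      ← exp_neg_pi_mul_I, ← exp_add, ← exp_add]
    congr 1
    push_cast
    ring

lemma exp_mul_pow_eq_jacobiTheta₂_term (σ v : ℂ) (N i : ℕ) :
    exp (-(π * I * N) + π * I * σ * N * (N + 1) - 2 * π * I * v * N) *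
        (𝐞(σ) ^ i.choose 2 * (-(𝐞(v) / 𝐞(σ) ^ N)) ^ i) =
      jacobiTheta₂_term (i - N) (v + 1 / 2 - σ / 2) σ := by
  rw [neg_eq_neg_one_mul (𝐞(v) / 𝐞(σ) ^ N), ← exp_pi_mul_I, ← exp_nat_mul, ← exp_nat_mul,
    ← exp_sub, ← exp_add, ← exp_nat_mul, ← exp_add, ← exp_add, jacobiTheta₂_term,
    Nat.cast_choose_two]
  congr 1
  push_cast
  ring

lemma norm_exp_two_pi_I_mul_lt_one {σ : ℂ} (hσ : 0 < σ.im) : ‖𝐞(σ)‖ < 1 :=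
  UpperHalfPlane.norm_exp_two_pi_I_lt_one ⟨σ, hσ⟩

lemma thetaPartial_exp_eq_sum_antidiagonal {σ : ℂ} (hσ : 0 < σ.im) (v : ℂ) (N : ℕ) :
    thetaPartial 𝐞(σ) 𝐞(v) N = ∑ i ∈ antidiagonal (2 * N),
      qPochhammer 𝐞(σ) N *
        (qPochhammer 𝐞(σ) (2 * N) / (qPochhammer 𝐞(σ) i.1 * qPochhammer 𝐞(σ) i.2)) *
          jacobiTheta₂_term (i.1 - N) (v + 1 / 2 - σ / 2) σ := by
  have hp := pow_succ_ne_one (norm_exp_two_pi_I_mul_lt_one hσ)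
  rw [thetaPartial, prod_mul_distrib, prod_one_sub_mul_one_sub_eq (exp_ne_zero _) (exp_ne_zero _),
    prod_one_add_mul_pow_eq_sum_antidiagonal hp, prod_neg_exp_div_exp, ← qPochhammer, mul_sum,
    sum_mul]
  refine sum_congr rfl fun i hi => ?_
  rw [← exp_mul_pow_eq_jacobiTheta₂_term, mem_antidiagonal.1 hi]
  ring

/-- The coefficient of the `n`-th theta term in the `N`-th partial product of `Θ_p`, that is
`(p; p)_N (p; p)_{2N} / ((p; p)_{N+n} (p; p)_{N-n})`, and `0` outside `-N ≤ n ≤ N`. -/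
def thetaPartialCoeff (p : ℂ) (N : ℕ) (n : ℤ) : ℂ :=
  if n ∈ Icc (-N : ℤ) N then
    qPochhammer p N *
      (qPochhammer p (2 * N) / (qPochhammer p (N + n).toNat * qPochhammer p (N - n).toNat))
  else 0

lemma thetaPartial_exp_eq_tsum {σ : ℂ} (hσ : 0 < σ.im) (v : ℂ) (N : ℕ) :
    thetaPartial 𝐞(σ) 𝐞(v) N =
      ∑' n : ℤ, thetaPartialCoeff 𝐞(σ) N n * jacobiTheta₂_term n (v + 1 / 2 - σ / 2) σ := by
  rw [thetaPartial_exp_eq_sum_antidiagonal hσ, tsum_eq_sum (s := Icc (-N : ℤ) N) fun n hn => by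
    rw [thetaPartialCoeff, if_neg hn, zero_mul]]
  refine sum_nbij' (fun i => (i.1 : ℤ) - N) (fun n => ((N + n).toNat, (N - n).toNat))
    (fun i hi => ?_) (fun n hn => ?_) (fun i hi => ?_) (fun n hn => ?_) (fun i hi => ?_)
  · rw [HasAntidiagonal.mem_antidiagonal] at hi
    rw [mem_Icc]
    omega
  · rw [mem_Icc] at hn
    rw [HasAntidiagonal.mem_antidiagonal]
    omega
  · rw [HasAntidiagonal.mem_antidiagonal] at hi
    ext <;> simp only <;> omega
  · rw [mem_Icc] at hn
    simp only
    omega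
  · rw [HasAntidiagonal.mem_antidiagonal] at hi
    rw [thetaPartialCoeff, if_pos (mem_Icc.2 (by omega)),
      show ((N : ℤ) + (i.1 - N)).toNat = i.1 by omega,
      show ((N : ℤ) - (i.1 - N)).toNat = i.2 by omega]

lemma tendsto_toNat_natCast_add (n : ℤ) :
    Tendsto (fun N : ℕ => ((N : ℤ) + n).toNat) atTop atTop := by
  refine tendsto_atTop.2 fun b => ?_
  filter_upwards [eventually_ge_atTop (b + n.natAbs)] with N hN
  omega

lemma tendsto_thetaPartialCoeff {p : ℂ} (hp : ‖p‖ < 1) (n : ℤ) :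
    Tendsto (fun N => thetaPartialCoeff p N n) atTop (𝓝 1) := by
  obtain ⟨L, hL, h_lim⟩ := exists_tendsto_qPochhammer hp
  have h_two_mul : Tendsto (fun N : ℕ => 2 * N) atTop atTop :=
    tendsto_id.const_mul_atTop' two_pos
  have h_lim_coeff := h_lim.mul ((h_lim.comp h_two_mul).div
    ((h_lim.comp (tendsto_toNat_natCast_add n)).mul (h_lim.comp (tendsto_toNat_natCast_add (-n))))
    (mul_ne_zero hL hL))
  rw [show L * (L / (L * L)) = 1 by field_simp] at h_lim_coeff
  refine h_lim_coeff.congr' ?_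
  filter_upwards [eventually_ge_atTop n.natAbs] with N hN
  rw [thetaPartialCoeff, if_pos (mem_Icc.2 (by omega))]
  rfl

lemma exists_norm_thetaPartialCoeff_le {p : ℂ} (hp : ‖p‖ < 1) :
    ∃ K, ∀ N n, ‖thetaPartialCoeff p N n‖ ≤ K := by
  obtain ⟨L, hL, h_lim⟩ := exists_tendsto_qPochhammer hp
  obtain ⟨K, hK⟩ := h_lim.norm.bddAbove_range
  obtain ⟨K', hK'⟩ := (h_lim.inv₀ hL).norm.bddAbove_range
  replace hK (n : ℕ) : ‖qPochhammer p n‖ ≤ K := hK ⟨n, rfl⟩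
  replace hK' (n : ℕ) : ‖(qPochhammer p n)⁻¹‖ ≤ K' := hK' ⟨n, rfl⟩
  have hK_nonneg : 0 ≤ K := (norm_nonneg _).trans (hK 0)
  have hK'_nonneg : 0 ≤ K' := (norm_nonneg _).trans (hK' 0)
  refine ⟨K * (K * (K' * K')), fun N n => ?_⟩
  rw [thetaPartialCoeff]
  split_ifs
  · rw [div_eq_mul_inv, mul_inv, norm_mul, norm_mul, norm_mul]
    gcongr <;> apply_assumption
  · rw [norm_zero]
    positivity

/-- The Jacobi triple product, by Tannery's theorem from its finite form. -/
theorem Theta_exp_eq_jacobiTheta₂ {σ : ℂ} (hσ : 0 < σ.im) (v : ℂ) :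
    Theta 𝐞(σ) 𝐞(v) = jacobiTheta₂ (v + 1 / 2 - σ / 2) σ := by
  have hp := norm_exp_two_pi_I_mul_lt_one hσ
  refine tendsto_nhds_unique (tendsto_thetaPartial hp _) ?_
  rw [funext (thetaPartial_exp_eq_tsum hσ v), jacobiTheta₂]
  obtain ⟨K, hK⟩ := exists_norm_thetaPartialCoeff_le hp
  refine tendsto_tsum_of_dominated_convergence
    (((summable_jacobiTheta₂_term_iff (v + 1 / 2 - σ / 2) σ).2 hσ).norm.mul_left K)
    (fun n => ?_) (Eventually.of_forall fun N n => ?_)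
  · simpa only [one_mul] using (tendsto_thetaPartialCoeff hp n).mul_const _
  · rw [norm_mul]
    gcongr
    exact hK N n

end TripleProduct

section ThetaAddition

open scoped Real

lemma bijective_intProd_parity : Function.Bijective
    (Sum.elim (fun q : ℤ × ℤ => (q.1 + q.2, q.1 - q.2))
      fun q : ℤ × ℤ => (q.1 + q.2 + 1, q.1 - q.2)) := by
  constructor
  · rintro (⟨a, b⟩ | ⟨a, b⟩) (⟨c, d⟩ | ⟨c, d⟩) h <;>
      simp only [Sum.elim_inl, Sum.elim_inr, Prod.mk.injEq, Sum.inl.injEq, Sum.inr.injEq,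
        reduceCtorEq] at h ⊢ <;> omega
  · rintro ⟨m, n⟩
    obtain ⟨c, h_even | h_odd⟩ := Int.even_or_odd' (m + n)
    · exact ⟨Sum.inl (c, m - c), by simp only [Sum.elim_inl, Prod.mk.injEq]; omega⟩
    · exact ⟨Sum.inr (c, m - c - 1), by simp only [Sum.elim_inr, Prod.mk.injEq]; omega⟩

lemma hasSum_intProd_of_parity {E : Type*} [AddCommMonoid E] [TopologicalSpace E] [ContinuousAdd E]
    {f : ℤ × ℤ → E} {s t : E} (h_even : HasSum (fun q : ℤ × ℤ => f (q.1 + q.2, q.1 - q.2)) s)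
    (h_odd : HasSum (fun q : ℤ × ℤ => f (q.1 + q.2 + 1, q.1 - q.2)) t) : HasSum f (s + t) :=
  (Equiv.ofBijective _ bijective_intProd_parity).hasSum_iff.1 (HasSum.sum h_even h_odd)

lemma hasSum_jacobiTheta₂_term_mul (x y : ℂ) {τ : ℂ} (hτ : 0 < τ.im) :
    HasSum (fun q : ℤ × ℤ => jacobiTheta₂_term q.1 x τ * jacobiTheta₂_term q.2 y τ)
      (jacobiTheta₂ x τ * jacobiTheta₂ y τ) := by
  have hx := ((summable_jacobiTheta₂_term_iff x τ).2 hτ).norm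
  have hy := ((summable_jacobiTheta₂_term_iff y τ).2 hτ).norm
  rw [jacobiTheta₂, jacobiTheta₂, tsum_mul_tsum_of_summable_norm hx hy]
  exact (summable_mul_of_summable_norm hx hy).hasSum

theorem jacobiTheta₂_add_mul_jacobiTheta₂_sub (x y : ℂ) {τ : ℂ} (hτ : 0 < τ.im) :
    jacobiTheta₂ (x + y) τ * jacobiTheta₂ (x - y) τ =
      jacobiTheta₂ (2 * x) (2 * τ) * jacobiTheta₂ (2 * y) (2 * τ) +
        exp (π * I * τ + 2 * π * I * (x + y)) *
          (jacobiTheta₂ (2 * x + τ) (2 * τ) * jacobiTheta₂ (2 * y + τ) (2 * τ)) := by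
  have h2τ : 0 < (2 * τ).im := by simpa using hτ
  have h_even (q : ℤ × ℤ) : jacobiTheta₂_term (q.1 + q.2) (x + y) τ *
      jacobiTheta₂_term (q.1 - q.2) (x - y) τ =
      jacobiTheta₂_term q.1 (2 * x) (2 * τ) * jacobiTheta₂_term q.2 (2 * y) (2 * τ) := by
    simp only [jacobiTheta₂_term, ← exp_add]
    congr 1
    push_cast
    ring
  have h_odd (q : ℤ × ℤ) : jacobiTheta₂_term (q.1 + q.2 + 1) (x + y) τ *
      jacobiTheta₂_term (q.1 - q.2) (x - y) τ =
      exp (π * I * τ + 2 * π * I * (x + y)) *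
        (jacobiTheta₂_term q.1 (2 * x + τ) (2 * τ) *
          jacobiTheta₂_term q.2 (2 * y + τ) (2 * τ)) := by
    simp only [jacobiTheta₂_term, ← exp_add]
    congr 1
    push_cast
    ring
  refine (hasSum_jacobiTheta₂_term_mul (x + y) (x - y) hτ).unique (hasSum_intProd_of_parity ?_ ?_)
  · simpa only [h_even] using hasSum_jacobiTheta₂_term_mul (2 * x) (2 * y) h2τ
  · simpa only [h_odd] using (hasSum_jacobiTheta₂_term_mul (2 * x + τ) (2 * y + τ) h2τ).mul_left _

lemma jacobiTheta₂_add_mul_jacobiTheta₂_sub_half_period (x y : ℂ) {τ : ℂ} (hτ : 0 < τ.im) :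
    jacobiTheta₂ (x + y + 1 / 2 - τ / 2) τ * jacobiTheta₂ (x - y + 1 / 2 - τ / 2) τ =
      jacobiTheta₂ (2 * x - τ) (2 * τ) * jacobiTheta₂ (2 * y) (2 * τ) -
        exp (2 * π * I * (x - y)) *
          (jacobiTheta₂ (2 * x) (2 * τ) * jacobiTheta₂ (2 * y - τ) (2 * τ)) := by
  have h_shift : jacobiTheta₂ (2 * y + τ) (2 * τ) =
      exp (-(4 * π * I * y)) * jacobiTheta₂ (2 * y - τ) (2 * τ) := by
    rw [show 2 * y + τ = 2 * y - τ + 2 * τ by ring, jacobiTheta₂_add_left']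
    congr 2
    ring
  have h_exp : exp (π * I * τ + 2 * π * I * (x + 1 / 2 - τ / 2 + y)) * exp (-(4 * π * I * y)) =
      -exp (2 * π * I * (x - y)) := by
    rw [neg_eq_neg_one_mul (exp _), ← exp_pi_mul_I, ← exp_add, ← exp_add]
    congr 1
    ring
  rw [show x + y + 1 / 2 - τ / 2 = x + 1 / 2 - τ / 2 + y by ring,
    show x - y + 1 / 2 - τ / 2 = x + 1 / 2 - τ / 2 - y by ring,
    jacobiTheta₂_add_mul_jacobiTheta₂_sub _ _ hτ, h_shift,
    show 2 * (x + 1 / 2 - τ / 2) + τ = 2 * x + 1 by ring,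
    show 2 * (x + 1 / 2 - τ / 2) = 2 * x - τ + 1 by ring,
    jacobiTheta₂_add_left, jacobiTheta₂_add_left]
  linear_combination
    jacobiTheta₂ (2 * x) (2 * τ) * jacobiTheta₂ (2 * y - τ) (2 * τ) * h_exp

end ThetaAddition

section Bracket

open scoped Real

variable {τ : ℂ} {r : ℝ}

lemma br_eq_exp_mul_jacobiTheta₂ (hτ : 0 < τ.im) (hr : r ≠ 0) (u : ℂ) :
    br τ r u = exp (π * I * (-τ)⁻¹ * ((u / r) ^ 2 - u / r)) *
      jacobiTheta₂ ((-τ)⁻¹ * (u / r) + 1 / 2 - (-τ)⁻¹ / 2) (-τ)⁻¹ := by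
  have hτ0 : τ ≠ 0 := by
    rintro rfl
    exact lt_irrefl 0 hτ
  have hr0 : (r : ℂ) ≠ 0 := ofReal_ne_zero.2 hr
  have h_nome : xp τ r (2 * r) = exp (2 * π * I * (-τ)⁻¹) := by
    rw [xp]
    congr 1
    field_simp
  have h_arg : xp τ r (2 * u) = exp (2 * π * I * ((-τ)⁻¹ * (u / r))) := by
    rw [xp]
    congr 1
    field_simp
  rw [br, h_nome, h_arg, Theta_exp_eq_jacobiTheta₂ (UpperHalfPlane.im_inv_neg_coe_pos ⟨τ, hτ⟩), xp]
  congr 2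
  field_simp

lemma exists_br_add_mul_br_sub_eq (hτ : 0 < τ.im) (hr : r ≠ 0) :
    ∃ f g : ℂ → ℂ, ∀ x y, br τ r (x + y) * br τ r (x - y) = g x * f y - f x * g y := by
  set σ := (-τ)⁻¹
  have hσ : 0 < σ.im := UpperHalfPlane.im_inv_neg_coe_pos ⟨τ, hτ⟩
  refine ⟨fun y => exp (2 * π * I * σ * (y / r) ^ 2) * jacobiTheta₂ (2 * σ * (y / r)) (2 * σ),
    fun x => exp (2 * π * I * σ * ((x / r) ^ 2 - x / r)) *
      jacobiTheta₂ (2 * σ * (x / r) - σ) (2 * σ), fun x y => ?_⟩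
  have h_theta := jacobiTheta₂_add_mul_jacobiTheta₂_sub_half_period (σ * (x / r)) (σ * (y / r)) hσ
  rw [← mul_add, ← mul_sub, ← add_div, ← sub_div, ← mul_assoc 2 σ, ← mul_assoc 2 σ]
    at h_theta
  have h_exp₁ : exp (π * I * σ * (((x + y) / r) ^ 2 - (x + y) / r)) *
      exp (π * I * σ * (((x - y) / r) ^ 2 - (x - y) / r)) =
      exp (2 * π * I * σ * ((x / r) ^ 2 - x / r)) * exp (2 * π * I * σ * (y / r) ^ 2) := by
    rw [← exp_add, ← exp_add]
    congr 1
    ring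
  have h_exp₂ : exp (π * I * σ * (((x + y) / r) ^ 2 - (x + y) / r)) *
      exp (π * I * σ * (((x - y) / r) ^ 2 - (x - y) / r)) *
      exp (2 * π * I * (σ * ((x - y) / r))) =
      exp (2 * π * I * σ * (x / r) ^ 2) * exp (2 * π * I * σ * ((y / r) ^ 2 - y / r)) := by
    rw [← exp_add, ← exp_add, ← exp_add]
    congr 1
    ring
  rw [br_eq_exp_mul_jacobiTheta₂ hτ hr, br_eq_exp_mul_jacobiTheta₂ hτ hr, mul_mul_mul_comm, h_theta]
  linear_combination
    jacobiTheta₂ (2 * σ * (x / r) - σ) (2 * σ) * jacobiTheta₂ (2 * σ * (y / r)) (2 * σ) * h_exp₁ -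
      jacobiTheta₂ (2 * σ * (x / r)) (2 * σ) * jacobiTheta₂ (2 * σ * (y / r) - σ) (2 * σ) * h_exp₂

lemma br_neg (hτ : 0 < τ.im) (hr : r ≠ 0) (u : ℂ) : br τ r (-u) = -br τ r u := by
  obtain ⟨f, g, h⟩ := exists_br_add_mul_br_sub_eq hτ hr
  have h_antisymm (v w : ℂ) : br τ r v * (br τ r (-w) + br τ r w) = 0 := by
    have h₁ := h ((v + w) / 2) ((v - w) / 2)
    have h₂ := h ((v - w) / 2) ((v + w) / 2)
    ring_nf at h₁ h₂ ⊢
    linear_combination h₁ + h₂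
  refine eq_neg_of_add_eq_zero_left (mul_self_eq_zero.1 ?_)
  linear_combination h_antisymm (-u) u + h_antisymm u u

theorem br_weierstrass (hτ : 0 < τ.im) (hr : r ≠ 0) (x y z w : ℂ) :
    br τ r (x + y) * br τ r (x - y) * (br τ r (z + w) * br τ r (z - w)) -
      br τ r (x + z) * br τ r (x - z) * (br τ r (y + w) * br τ r (y - w)) +
        br τ r (x + w) * br τ r (x - w) * (br τ r (y + z) * br τ r (y - z)) = 0 := by
  obtain ⟨f, g, h⟩ := exists_br_add_mul_br_sub_eq hτ hr
  simp only [h]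
  ring

end Bracket

section Factorial

variable {τ : ℂ} {r : ℝ}

@[simp]
lemma brF_zero (u : ℂ) : brF τ r u 0 = 1 := prod_range_zero _

lemma brF_succ (u : ℂ) (n : ℕ) : brF τ r u (n + 1) = brF τ r u n * br τ r (u + n) :=
  prod_range_succ _ _

lemma brF_add (u : ℂ) (m n : ℕ) : brF τ r u (m + n) = brF τ r u m * brF τ r (u + m) n := by
  simp only [brF, prod_range_add, Nat.cast_add, add_assoc]

lemma brF_succ' (u : ℂ) (n : ℕ) : brF τ r u (n + 1) = br τ r u * brF τ r (u + 1) n := by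
  simp [add_comm n, brF_add, brF_succ]

lemma brF_ne_zero_iff {u : ℂ} {n : ℕ} : brF τ r u n ≠ 0 ↔ ∀ j < n, br τ r (u + j) ≠ 0 := by
  simp only [brF, prod_ne_zero_iff, mem_range]

variable (τ r) in
/-- The symmetric factorial `[u ± z]_n = [u + z]_n [u - z]_n`. -/
def brPM (u z : ℂ) (n : ℕ) : ℂ := brF τ r (u + z) n * brF τ r (u - z) n

@[simp]
lemma brPM_zero (u z : ℂ) : brPM τ r u z 0 = 1 := by simp [brPM]

lemma brPM_add (u z : ℂ) (m n : ℕ) :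
    brPM τ r u z (m + n) = brPM τ r u z m * brPM τ r (u + m) z n := by
  simp only [brPM, brF_add, add_right_comm u, sub_add_eq_add_sub]
  ring

variable (τ r) in
/-- The coefficient of `[β ± z]` when `[α ± z]` is expanded in `[β ± z]` and `[γ ± z]`: the value
of `[α ± z] / [β ± z]` at the zero `z = γ` of `[γ ± z]`. -/
def interpCoeff (α β γ : ℂ) : ℂ :=
  br τ r (α + γ) * br τ r (α - γ) / (br τ r (β + γ) * br τ r (β - γ))

lemma brPM_one_eq_interpCoeff (hτ : 0 < τ.im) (hr : r ≠ 0) {α β γ : ℂ}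
    (h_add : br τ r (β + γ) ≠ 0) (h_sub : br τ r (β - γ) ≠ 0) (z : ℂ) :
    brPM τ r α z 1 =
      interpCoeff τ r α β γ * brPM τ r β z 1 + interpCoeff τ r α γ β * brPM τ r γ z 1 := by
  have h_weierstrass := br_weierstrass hτ hr α β γ z
  simp only [brPM, interpCoeff, brF_succ, brF_zero, one_mul, Nat.cast_zero, add_zero, add_comm γ β]
  rw [← neg_sub β γ, br_neg hτ hr]
  field_simp
  linear_combination h_weierstrass

end Factorial

section Pascal

variable {τ : ℂ} {r : ℝ}

variable (τ r) in
/-- The nonvanishing of every bracket in the denominators of `C_n^k(α, β, γ)`, `0 ≤ n ≤ k`, in a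
form that is monotone in `k` and symmetric in `β` and `γ`. -/
structure GenericPair (k : ℕ) (β γ : ℂ) : Prop where
  br_one_add_ne_zero : ∀ j < k, br τ r (1 + j) ≠ 0
  br_sub_add_ne_zero : ∀ j : ℤ, |j| < k → br τ r (β - γ + j) ≠ 0
  br_add_add_ne_zero : ∀ j < k, br τ r (β + γ + j) ≠ 0

lemma GenericPair.mono {k l : ℕ} {β γ : ℂ} (h : GenericPair τ r l β γ) (hkl : k ≤ l) :
    GenericPair τ r k β γ where
  br_one_add_ne_zero j hj := h.br_one_add_ne_zero j (by omega)
  br_sub_add_ne_zero j hj := h.br_sub_add_ne_zero j (by omega)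
  br_add_add_ne_zero j hj := h.br_add_add_ne_zero j (by omega)

lemma GenericPair.symm (hτ : 0 < τ.im) (hr : r ≠ 0) {k : ℕ} {β γ : ℂ}
    (h : GenericPair τ r k β γ) : GenericPair τ r k γ β where
  br_one_add_ne_zero := h.br_one_add_ne_zero
  br_sub_add_ne_zero j hj := by
    have h_neg := h.br_sub_add_ne_zero (-j) (by rwa [abs_neg])
    rwa [show β - γ + ((-j : ℤ) : ℂ) = -(γ - β + j) by push_cast; ring, br_neg hτ hr,
      neg_ne_zero] at h_neg
  br_add_add_ne_zero := by simpa only [add_comm γ β] using h.br_add_add_ne_zero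

lemma GenericPair.of_CdenomNZ (hτ : 0 < τ.im) (hr : r ≠ 0) {k : ℕ} {β γ : ℂ}
    (h : ∀ n ≤ k, CdenomNZ τ r k n β γ) : GenericPair τ r k β γ := by
  obtain ⟨h_one, -, h_sub, -, h_add⟩ := h k le_rfl
  obtain ⟨-, -, -, h_sub', -⟩ := h 0 k.zero_le
  simp only [add_sub_cancel_right, Nat.cast_zero, sub_zero, Nat.sub_zero, brF_ne_zero_iff]
    at h_one h_sub h_sub' h_add
  refine ⟨h_one, fun j hj => ?_, h_add⟩
  obtain ⟨i, rfl | rfl⟩ := j.eq_nat_or_neg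
  · exact_mod_cast h_sub i (by simpa using hj)
  · have h_i := h_sub' i (by simpa using hj)
    rwa [show γ - β + (i : ℂ) = -(β - γ + ((-i : ℤ) : ℂ)) by push_cast; ring, br_neg hτ hr,
      neg_ne_zero] at h_i

lemma Cnk_add_left (a b : ℕ) (α β γ : ℂ) : Cnk τ r (a + b) a α β γ =
    brF τ r 1 (a + b) / (brF τ r 1 a * brF τ r 1 b) *
      (brF τ r (α - γ) a * brF τ r (α + γ + b) a * brF τ r (α - β) b * brF τ r (α + β + a) b) /
      (brF τ r (β - γ - b) a * brF τ r (γ - β - a) b * brF τ r (β + γ) (a + b)) := by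
  rw [Cnk, Nat.add_sub_cancel_left, Nat.cast_add]
  congr 4 <;> ring_nf

lemma Cnk_add_left_comm (a b : ℕ) (α β γ : ℂ) :
    Cnk τ r (a + b) a α β γ = Cnk τ r (b + a) b α γ β := by
  rw [Cnk_add_left, Cnk_add_left, add_comm b a, add_comm γ β]
  ring

/-- The factor common to the three terms of the Pascal recurrence for `C_{a+1}^{a+b+2}(α, β, γ)`. -/
def pascalCore (τ : ℂ) (r : ℝ) (a b : ℕ) (α β γ : ℂ) : ℂ :=
  brF τ r 1 (a + b + 1) / (brF τ r 1 (a + 1) * brF τ r 1 (b + 1)) *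
    (brF τ r (α - γ) (a + 1) * brF τ r (α + γ + b + 1) a *
      brF τ r (α - β) (b + 1) * brF τ r (α + β + a + 1) b) /
    (brF τ r (β - γ - b - 1) (a + 1) * brF τ r (γ - β - a - 1) (b + 1) *
      brF τ r (β + γ) (a + b + 2))

lemma pascalCore_comm (a b : ℕ) (α β γ : ℂ) :
    pascalCore τ r a b α β γ = pascalCore τ r b a α γ β := by
  rw [pascalCore, pascalCore, add_comm b a, add_comm γ β]
  ring

lemma Cnk_succ_succ_eq_pascalCore (a b : ℕ) (α β γ : ℂ) :
    Cnk τ r (a + 1 + (b + 1)) (a + 1) α β γ = pascalCore τ r a b α β γ *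
      (br τ r (a + b + 2) * br τ r (α + γ + a + b + 1) * br τ r (α + β + a + b + 1)) := by
  rw [Cnk_add_left, show a + 1 + (b + 1) = a + b + 1 + 1 by omega, pascalCore,
    brF_succ 1 (a + b + 1), brF_succ (α + γ + _) a, brF_succ (α + β + _) b]
  push_cast
  ring_nf

lemma Cnk_left_succ_mul_interpCoeff {a b : ℕ} {α β γ : ℂ} (h_one : br τ r (a + 1) ≠ 0)
    (h_sub : br τ r (γ - β - a - 1) ≠ 0) :
    Cnk τ r (a + (b + 1)) a α β γ * interpCoeff τ r (α + (a + b + 1)) (β + a) (γ + (b + 1)) =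
      pascalCore τ r a b α β γ *
        (br τ r (a + 1) * br τ r (α + β + a) * br τ r (γ - β - a - 1) *
          br τ r (α + γ + a + 2 * b + 2) / br τ r (γ - β + b - a)) := by
  have h_factor : brF τ r 1 (a + 1) = brF τ r 1 a * br τ r (a + 1) := by
    rw [brF_succ, add_comm 1]
  have h_shift : brF τ r (γ - β - a) (b + 1) =
      brF τ r (γ - β - a - 1) (b + 1) * br τ r (γ - β + b - a) / br τ r (γ - β - a - 1) := by
    have h_two := brF_succ' (τ := τ) (r := r) (γ - β - a - 1) (b + 1)
    rw [brF_succ, sub_add_cancel] at h_two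
    rw [eq_div_iff h_sub, mul_comm, ← h_two]
    push_cast
    ring_nf
  have h_interp : interpCoeff τ r (α + (a + b + 1)) (β + a) (γ + (b + 1)) =
      br τ r (α + γ + a + 2 * b + 2) * br τ r (α - γ + a) /
        (br τ r (β + γ + a + b + 1) * br τ r (β - γ + a - b - 1)) := by
    rw [interpCoeff]
    ring_nf
  rw [Cnk_add_left, h_interp, h_shift, brF_succ' (α + β + a), pascalCore, h_factor,
    brF_succ (α - γ), brF_succ (β - γ - b - 1), brF_succ (β + γ) (a + b + 1)]
  push_cast
  field_simp
  ring_nf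

lemma br_weierstrass_pascal (hτ : 0 < τ.im) (hr : r ≠ 0) (a b α β γ : ℂ) :
    br τ r (a + b + 2) * br τ r (α + γ + a + b + 1) * br τ r (α + β + a + b + 1) *
        br τ r (β - γ + a - b) =
      br τ r (b + 1) * br τ r (α + γ + b) * br τ r (β - γ - b - 1) *
          br τ r (α + β + 2 * a + b + 2) -
        br τ r (a + 1) * br τ r (α + β + a) * br τ r (γ - β - a - 1) *
          br τ r (α + γ + a + 2 * b + 2) := by
  have h := br_weierstrass hτ hr (α + (β + γ) / 2 + a + b + 1) ((β - γ) / 2)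
    ((β - γ) / 2 + a + 1) (b + 1 - (β - γ) / 2)
  rw [show (β - γ) / 2 - ((β - γ) / 2 + a + 1) = -(a + 1) by ring, br_neg hτ hr] at h
  rw [show γ - β - a - 1 = -((β - γ) / 2 + ((β - γ) / 2 + a + 1)) by ring, br_neg hτ hr]
  ring_nf at h ⊢
  linear_combination h

theorem Cnk_pascal (hτ : 0 < τ.im) (hr : r ≠ 0) {a b : ℕ} {β γ : ℂ}
    (h : GenericPair τ r (a + b + 2) β γ) (α : ℂ) :
    Cnk τ r (a + 1 + (b + 1)) (a + 1) α β γ =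
      Cnk τ r (a + (b + 1)) a α β γ *
          interpCoeff τ r (α + (a + b + 1)) (β + a) (γ + (b + 1)) +
        Cnk τ r (a + 1 + b) (a + 1) α β γ *
          interpCoeff τ r (α + (a + b + 1)) (γ + b) (β + (a + 1)) := by
  have h_one (i : ℕ) (hi : i < a + b + 2) : br τ r (i + 1) ≠ 0 :=
    add_comm (1 : ℂ) i ▸ h.br_one_add_ne_zero i hi
  have h_a : br τ r (γ - β - a - 1) ≠ 0 := by
    convert (h.symm hτ hr).br_sub_add_ne_zero (-a - 1) (by rw [abs_lt]; push_cast; omega) using 2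
    push_cast
    ring
  have h_b : br τ r (β - γ - b - 1) ≠ 0 := by
    convert h.br_sub_add_ne_zero (-b - 1) (by rw [abs_lt]; push_cast; omega) using 2
    push_cast
    ring
  have h_diag : br τ r (β - γ + a - b) ≠ 0 := by
    convert h.br_sub_add_ne_zero (a - b) (by rw [abs_lt]; push_cast; omega) using 2
    push_cast
    ring
  have h_odd : br τ r (γ - β + b - a) = -br τ r (β - γ + a - b) := by
    rw [← br_neg hτ hr]
    ring_nf
  have h_weierstrass := br_weierstrass_pascal hτ hr a b α β γ
  rw [Cnk_succ_succ_eq_pascalCore, Cnk_left_succ_mul_interpCoeff (h_one a (by omega)) h_a, h_odd,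
    Cnk_add_left_comm (a + 1) b, add_comm (a : ℂ) b,
    Cnk_left_succ_mul_interpCoeff (h_one b (by omega)) h_b, pascalCore_comm b a, ← mul_add]
  congr 1
  field_simp
  ring_nf at h_weierstrass ⊢
  linear_combination h_weierstrass

lemma Cnk_succ_self {k : ℕ} {β γ : ℂ} (h : ∀ j < k + 1, br τ r (1 + j) ≠ 0) (α : ℂ) :
    Cnk τ r (k + 1) (k + 1) α β γ =
      Cnk τ r k k α β γ * interpCoeff τ r (α + k) (β + k) γ := by
  have h_k := brF_ne_zero_iff.2 fun j (hj : j < k) => h j (by omega)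
  have h_succ := brF_ne_zero_iff.2 h
  have h_self := Cnk_add_left (τ := τ) (r := r) (k + 1) 0 α β γ
  have h_self' := Cnk_add_left (τ := τ) (r := r) k 0 α β γ
  simp only [add_zero, brF_zero, mul_one, Nat.cast_zero, sub_zero, div_self h_k,
    div_self h_succ, one_mul] at h_self h_self'
  rw [h_self, h_self', interpCoeff, div_mul_div_comm, brF_succ, brF_succ, brF_succ, brF_succ]
  ring_nf

lemma Cnk_succ_zero {k : ℕ} {β γ : ℂ} (h : ∀ j < k + 1, br τ r (1 + j) ≠ 0) (α : ℂ) :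
    Cnk τ r (k + 1) 0 α β γ = Cnk τ r k 0 α β γ * interpCoeff τ r (α + k) (γ + k) β := by
  have h_comm (l : ℕ) : Cnk τ r l 0 α β γ = Cnk τ r l l α γ β := by
    simpa using Cnk_add_left_comm (τ := τ) (r := r) 0 l α β γ
  rw [h_comm, h_comm, Cnk_succ_self h]

end Pascal

section Binomial

variable {τ : ℂ} {r : ℝ}

theorem brPM_eq_sum_antidiagonal (hτ : 0 < τ.im) (hr : r ≠ 0) {k : ℕ} {β γ : ℂ}
    (h : GenericPair τ r k β γ) (α z : ℂ) :
    brPM τ r α z k = ∑ i ∈ antidiagonal k,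
      Cnk τ r (i.1 + i.2) i.1 α β γ * (brPM τ r β z i.1 * brPM τ r γ z i.2) := by
  induction k with
  | zero => simp [Cnk]
  | succ k ih =>
    have h_split (i : ℕ × ℕ) (hi : i ∈ antidiagonal k) : brPM τ r (α + k) z 1 =
        interpCoeff τ r (α + (i.1 + i.2)) (β + i.1) (γ + i.2) * brPM τ r (β + i.1) z 1 +
          interpCoeff τ r (α + (i.1 + i.2)) (γ + i.2) (β + i.1) * brPM τ r (γ + i.2) z 1 := by
      obtain rfl := mem_antidiagonal.1 hi
      rw [Nat.cast_add, brPM_one_eq_interpCoeff hτ hr]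
      · convert h.br_add_add_ne_zero (i.1 + i.2) (by omega) using 2
        push_cast
        ring
      · convert h.br_sub_add_ne_zero (i.1 - i.2) (by rw [abs_lt]; push_cast; omega) using 2
        push_cast
        ring
    rw [brPM_add, ih (h.mono k.le_succ), sum_mul, ← sum_antidiagonal_succ_of_pascal
      (A := fun a b => Cnk τ r (a + b) a α β γ * interpCoeff τ r (α + (a + b)) (β + a) (γ + b))
      (B := fun a b => Cnk τ r (a + b) a α β γ * interpCoeff τ r (α + (a + b)) (γ + b) (β + a))
      (C := fun a b => Cnk τ r (a + b) a α β γ) _ _ _ fun a b => brPM τ r β z a * brPM τ r γ z b]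
    · refine sum_congr rfl fun i hi => ?_
      rw [h_split i hi, brPM_add β, brPM_add γ]
      ring
    · simpa using Cnk_succ_zero h.br_one_add_ne_zero α
    · simpa using Cnk_succ_self h.br_one_add_ne_zero α
    · rintro a b rfl
      simpa [add_assoc, add_comm (1 : ℂ)] using Cnk_pascal hτ hr h α

theorem brPM_eq_sum_range (hτ : 0 < τ.im) (hr : r ≠ 0) {k : ℕ} {β γ : ℂ}
    (h : ∀ n ≤ k, CdenomNZ τ r k n β γ) (α z : ℂ) :
    brPM τ r α z k = ∑ n ∈ range (k + 1),
      Cnk τ r k n α β γ * (brPM τ r β z n * brPM τ r γ z (k - n)) := by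
  rw [brPM_eq_sum_antidiagonal hτ hr (.of_CdenomNZ hτ hr h),
    Nat.sum_antidiagonal_eq_sum_range_succ_mk]
  refine sum_congr rfl fun n hn => ?_
  rw [Nat.add_sub_of_le (mem_range_succ_iff.1 hn)]

lemma brPM_mul_brPM_sub_eq_sum_range (hτ : 0 < τ.im) (hr : r ≠ 0) {n k : ℕ} (hn : n ≤ k)
    {β γ : ℂ} (h : ∀ j ≤ n, CdenomNZ τ r n j γ (β + k - n)) (α z : ℂ) :
    brPM τ r α z n * brPM τ r β z (k - n) = ∑ j ∈ range (n + 1),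
      Cnk τ r n j α γ (β + k - n) * (brPM τ r γ z j * brPM τ r β z (k - j)) := by
  rw [brPM_eq_sum_range hτ hr h, sum_mul]
  refine sum_congr rfl fun j hj => ?_
  have h_merge : brPM τ r β z (k - n) * brPM τ r (β + k - n) z (n - j) = brPM τ r β z (k - j) := by
    rw [← Nat.sub_add_sub_cancel hn (mem_range_succ_iff.1 hj), brPM_add, Nat.cast_sub hn,
      add_sub_assoc]
  rw [← h_merge]
  ring

lemma brPM_mul_brPM_sub_eq_sum_Ico (hτ : 0 < τ.im) (hr : r ≠ 0) {j k : ℕ} (hj : j ≤ k)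
    {γ δ : ℂ} (h : ∀ n ≤ k - j, CdenomNZ τ r (k - j) n (γ + j) δ) (β z : ℂ) :
    brPM τ r γ z j * brPM τ r β z (k - j) = ∑ m ∈ Ico j (k + 1),
      Cnk τ r (k - j) (m - j) β (γ + j) δ * (brPM τ r γ z m * brPM τ r δ z (k - m)) := by
  rw [brPM_eq_sum_range hτ hr h, mul_sum, sum_Ico_eq_sum_range, Nat.sub_add_comm hj]
  refine sum_congr rfl fun n _ => ?_
  rw [Nat.add_sub_cancel_left, brPM_add, Nat.sub_sub]
  ring

end Binomial

/-- Change-of-base expansion with product-of-binomials coefficients. -/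
theorem change_of_base_Rnm (τ : ℂ) (r : ℝ) (hτ : 0 < τ.im) (hr : 0 < r)
    (k n : ℕ) (hn : n ≤ k) (α β γ δ z : ℂ)
    (hd : ∀ m ≤ k, RdenomNZ τ r k n m β γ δ) :
    brF τ r (α + (r : ℂ) * z) n * brF τ r (α - (r : ℂ) * z) n *
        brF τ r (β + (r : ℂ) * z) (k - n) * brF τ r (β - (r : ℂ) * z) (k - n) =
      ∑ m ∈ Finset.range (k + 1),
        Rnm τ r k n m α β γ δ *
          (brF τ r (γ + (r : ℂ) * z) m * brF τ r (γ - (r : ℂ) * z) m *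
            brF τ r (δ + (r : ℂ) * z) (k - m) * brF τ r (δ - (r : ℂ) * z) (k - m)) := by
  have h_outer (j : ℕ) (hj : j ≤ n) : CdenomNZ τ r n j γ (β + k - n) :=
    (hd k le_rfl j (le_min hj (hj.trans hn))).1
  have h_inner (j : ℕ) (hj : j ≤ n) (i : ℕ) (hi : i ≤ k - j) :
      CdenomNZ τ r (k - j) i (γ + j) δ := by
    have h := (hd (i + j) (by omega) j (le_min hj (j.le_add_left i))).2
    rwa [Nat.add_sub_cancel] at h
  have h_fold (u v : ℂ) (a b : ℕ) : brF τ r (u + r * z) a * brF τ r (u - r * z) a *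
      brF τ r (v + r * z) b * brF τ r (v - r * z) b =
      brPM τ r u (r * z) a * brPM τ r v (r * z) b := mul_assoc _ _ _
  simp only [h_fold]
  rw [brPM_mul_brPM_sub_eq_sum_range hτ hr.ne' hn h_outer]
  calc ∑ j ∈ range (n + 1), Cnk τ r n j α γ (β + k - n) *
        (brPM τ r γ (r * z) j * brPM τ r β (r * z) (k - j))
      = ∑ j ∈ range (n + 1), ∑ m ∈ Ico j (k + 1), Cnk τ r n j α γ (β + k - n) *
          Cnk τ r (k - j) (m - j) β (γ + j) δ *
          (brPM τ r γ (r * z) m * brPM τ r δ (r * z) (k - m)) := by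
        refine sum_congr rfl fun j hj => ?_
        have hj : j ≤ n := mem_range_succ_iff.1 hj
        simp only [brPM_mul_brPM_sub_eq_sum_Ico hτ hr.ne' (hj.trans hn) (h_inner j hj), mul_sum,
          mul_assoc]
    _ = _ := by simp only [sum_range_sum_Ico_comm, Rnm, sum_mul]

end Ell
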